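/- Let X and Y be countable types and α : X → Y → ℝ with values in [0,1]. For all μ ∈ PMF (Option X) and ν ∈ PMF (Option Y): ∑_{x ∈ X} μ(some x) ≤ ∑_{y ∈ Y} ν(some y) + W(α_⊥)(μ, ν). Equivalently, the difference of the probabilities of convergence, ∑_x μ(some x) − ∑_y ν(some y), is bounded by W(α_⊥)(μ, ν). -/

import Mathlib

open scoped ENNReal

/-- `ω` is a coupling of `μ` and `ν`: a joint distribution with marginals `μ` and `ν`. -/
def IsCoupling {X Y : Type*} (μ : PMF X) (ν : PMF Y) (ω : PMF (X × Y)) : Prop :=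
  (∀ x, ∑' y, ω (x, y) = μ x) ∧ ∀ y, ∑' x, ω (x, y) = ν y

/-- The transport cost `∑_{x,y} α(x,y) · ω(x,y)` of a joint distribution `ω`. -/
noncomputable def Wcost {X Y : Type*} (α : X → Y → ℝ) (ω : PMF (X × Y)) : ℝ :=
  ∑' p : X × Y, α p.1 p.2 * (ω p).toReal

/-- The Wasserstein lifting `W α(μ, ν) = inf { Wcost α ω | ω coupling of μ, ν }`. -/
noncomputable def Wass {X Y : Type*} (α : X → Y → ℝ) (μ : PMF X) (ν : PMF Y) : ℝ :=
  sInf (Wcost α '' {ω | IsCoupling μ ν ω})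

/-- The partiality lifting of `α : X → Y → ℝ` to `Option X → Option Y → ℝ`:
`α_⊥(some x, some y) = α x y`, `α_⊥(none, m) = 0`, `α_⊥(some x, none) = 1`. -/
def optLift {X Y : Type*} (α : X → Y → ℝ) : Option X → Option Y → ℝ
  | none, _ => 0
  | some x, some y => α x y
  | some _, none => 1

/-! Weak Kantorovich duality: integrating `f x - g y ≤ c x y` against any coupling of `μ` and
`ν` gives `∑ f μ - ∑ g ν ≤ W c(μ, ν)`. Adequacy is the case where `f` and `g` are the
convergence indicators on `Option X` and `Option Y`: their difference is positive only at
`(some x, none)`, where the lifted cost is `1`. -/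

section Summability

variable {A X Y : Type*}

lemma hasSum_mul_of_hasSum_fst {w : X × Y → ℝ} {m f : X → ℝ} (hw : 0 ≤ w)
    (hm : ∀ x, HasSum (fun y ↦ w (x, y)) (m x)) (hf : Summable fun x ↦ f x * m x) :
    HasSum (fun p ↦ f p.1 * w p) (∑' x, f x * m x) := by
  have hfiber (x : X) : HasSum (fun y ↦ f x * w (x, y)) (f x * m x) := (hm x).mul_left (f x)
  have habs_fiber (x : X) : HasSum (fun y ↦ |f x * w (x, y)|) |f x * m x| := by
    have hm_nonneg : 0 ≤ m x := (hm x).nonneg fun y ↦ hw (x, y)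
    simpa only [abs_mul, abs_of_nonneg hm_nonneg, abs_of_nonneg (hw _)] using
      (hm x).mul_left |f x|
  have hsummable : Summable fun p : X × Y ↦ f p.1 * w p := by
    refine Summable.of_abs <| (summable_prod_of_nonneg fun _ ↦ abs_nonneg _).2
      ⟨fun x ↦ (habs_fiber x).summable, ?_⟩
    simpa only [(habs_fiber _).tsum_eq] using hf.abs
  have htsum : ∑' p : X × Y, f p.1 * w p = ∑' x, f x * m x := by
    simpa only [(hfiber _).tsum_eq] using hsummable.tsum_prod' fun x ↦ (hfiber x).summable
  exact htsum ▸ hsummable.hasSum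

lemma summable_mul_toReal_of_abs_le (μ : PMF A) {f : A → ℝ} {C : ℝ} (hf : ∀ a, |f a| ≤ C) :
    Summable fun a ↦ f a * (μ a).toReal := by
  refine .of_norm_bounded ((ENNReal.summable_toReal μ.tsum_coe_ne_top).mul_left C) fun a ↦ ?_
  rw [norm_mul, Real.norm_eq_abs, Real.norm_of_nonneg ENNReal.toReal_nonneg]
  exact mul_le_mul_of_nonneg_right (hf a) ENNReal.toReal_nonneg

lemma hasSum_toReal_of_tsum_eq {u : A → ℝ≥0∞} {s : ℝ≥0∞} (hs : s ≠ ∞) (hu : ∑' a, u a = s) :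
    HasSum (fun a ↦ (u a).toReal) s.toReal := by
  subst hu
  rw [ENNReal.tsum_toReal_eq (ENNReal.ne_top_of_tsum_ne_top hs)]
  exact ENNReal.hasSum_toReal hs

end Summability

section Duality

variable {X Y : Type*} {μ : PMF X} {ν : PMF Y}

lemma exists_isCoupling (μ : PMF X) (ν : PMF Y) : ∃ ω, IsCoupling μ ν ω := by
  have hmass : ∑' p : X × Y, μ p.1 * ν p.2 = 1 := by
    rw [ENNReal.tsum_prod (f := fun x y ↦ μ x * ν y)]
    simp only [ENNReal.tsum_mul_left, PMF.tsum_coe, mul_one]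
  refine ⟨⟨fun p ↦ μ p.1 * ν p.2, hmass ▸ ENNReal.summable.hasSum⟩, fun x ↦ ?_, fun y ↦ ?_⟩
  · change ∑' y, μ x * ν y = μ x
    rw [ENNReal.tsum_mul_left, ν.tsum_coe, mul_one]
  · change ∑' x, μ x * ν y = ν y
    rw [ENNReal.tsum_mul_right, μ.tsum_coe, one_mul]

namespace IsCoupling

variable {ω : PMF (X × Y)}

lemma hasSum_mul_fst (h : IsCoupling μ ν ω) {f : X → ℝ}
    (hf : Summable fun x ↦ f x * (μ x).toReal) :
    HasSum (fun p ↦ f p.1 * (ω p).toReal) (∑' x, f x * (μ x).toReal) :=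
  hasSum_mul_of_hasSum_fst (fun _ ↦ ENNReal.toReal_nonneg)
    (fun x ↦ hasSum_toReal_of_tsum_eq (μ.apply_ne_top x) (h.1 x)) hf

lemma hasSum_mul_snd (h : IsCoupling μ ν ω) {g : Y → ℝ}
    (hg : Summable fun y ↦ g y * (ν y).toReal) :
    HasSum (fun p ↦ g p.2 * (ω p).toReal) (∑' y, g y * (ν y).toReal) :=
  (Equiv.prodComm Y X).hasSum_iff.1 <|
    hasSum_mul_of_hasSum_fst (w := fun p ↦ (ω p.swap).toReal) (fun _ ↦ ENNReal.toReal_nonneg)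
      (fun y ↦ hasSum_toReal_of_tsum_eq (ν.apply_ne_top y) (h.2 y)) hg

lemma tsum_sub_tsum_le_Wcost (h : IsCoupling μ ν ω) {f : X → ℝ} {g : Y → ℝ} {c : X → Y → ℝ}
    (hf : Summable fun x ↦ f x * (μ x).toReal) (hg : Summable fun y ↦ g y * (ν y).toReal)
    (hc : Summable fun p : X × Y ↦ c p.1 p.2 * (ω p).toReal)
    (hfgc : ∀ x y, f x - g y ≤ c x y) :
    ∑' x, f x * (μ x).toReal - ∑' y, g y * (ν y).toReal ≤ Wcost c ω := by
  refine hasSum_le (fun p ↦ ?_) ((h.hasSum_mul_fst hf).sub (h.hasSum_mul_snd hg)) hc.hasSum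
  rw [← sub_mul]
  exact mul_le_mul_of_nonneg_right (hfgc p.1 p.2) ENNReal.toReal_nonneg

end IsCoupling

lemma le_Wass {c : X → Y → ℝ} {r : ℝ} (hr : ∀ ω, IsCoupling μ ν ω → r ≤ Wcost c ω) :
    r ≤ Wass c μ ν :=
  le_csInf (Set.Nonempty.image _ (exists_isCoupling μ ν)) (Set.forall_mem_image.2 hr)

theorem tsum_sub_tsum_le_Wass {f : X → ℝ} {g : Y → ℝ} {c : X → Y → ℝ}
    (hf : Summable fun x ↦ f x * (μ x).toReal) (hg : Summable fun y ↦ g y * (ν y).toReal)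
    (hc : ∀ ω, IsCoupling μ ν ω → Summable fun p : X × Y ↦ c p.1 p.2 * (ω p).toReal)
    (hfgc : ∀ x y, f x - g y ≤ c x y) :
    ∑' x, f x * (μ x).toReal - ∑' y, g y * (ν y).toReal ≤ Wass c μ ν :=
  le_Wass fun ω hω ↦ hω.tsum_sub_tsum_le_Wcost hf hg (hc ω hω) hfgc

end Duality

section Convergence

variable {A X Y : Type*}

/-- The indicator of convergence: `1` on `some a` and `0` on `none`. Its expectation under a
distribution on `Option A` is the probability of convergence. -/
def convergenceIndicator : Option A → ℝ
  | none => 0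
  | some _ => 1

lemma abs_convergenceIndicator_le_one (a : Option A) : |convergenceIndicator a| ≤ 1 := by
  cases a <;> simp [convergenceIndicator]

lemma tsum_convergenceIndicator_mul (m : Option A → ℝ) :
    ∑' a, convergenceIndicator a * m a = ∑' a : A, m (some a) := by
  have hsupport : Function.support (fun a ↦ convergenceIndicator a * m a) ⊆
      Set.range (some : A → Option A) := by
    rintro (_ | a) ha
    · simp [convergenceIndicator] at ha
    · exact Set.mem_range_self a
  rw [← (Option.some_injective A).tsum_eq hsupport]
  simp only [convergenceIndicator, one_mul]

lemma convergenceIndicator_sub_le_optLift {α : X → Y → ℝ} (hα : ∀ x y, 0 ≤ α x y)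
    (a : Option X) (b : Option Y) :
    convergenceIndicator a - convergenceIndicator b ≤ optLift α a b := by
  cases a <;> cases b <;> simp [convergenceIndicator, optLift, hα]

lemma abs_optLift_le_max {α : X → Y → ℝ} {C : ℝ} (hα : ∀ x y, |α x y| ≤ C)
    (a : Option X) (b : Option Y) : |optLift α a b| ≤ max C 1 := by
  cases a <;> cases b <;> simp [optLift, hα]

end Convergence

theorem wasserstein_adequacy_general {X Y : Type*} {α : X → Y → ℝ} {C : ℝ}
    (hα_nonneg : ∀ x y, 0 ≤ α x y) (hα_le : ∀ x y, α x y ≤ C)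
    (μ : PMF (Option X)) (ν : PMF (Option Y)) :
    ∑' x : X, (μ (some x)).toReal ≤
      ∑' y : Y, (ν (some y)).toReal + Wass (optLift α) μ ν := by
  have hα_abs (x : X) (y : Y) : |α x y| ≤ C := (abs_of_nonneg (hα_nonneg x y)).trans_le (hα_le x y)
  have hduality := tsum_sub_tsum_le_Wass
    (summable_mul_toReal_of_abs_le μ abs_convergenceIndicator_le_one)
    (summable_mul_toReal_of_abs_le ν abs_convergenceIndicator_le_one)
    (fun ω _ ↦ summable_mul_toReal_of_abs_le ω fun p ↦ abs_optLift_le_max hα_abs p.1 p.2)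
    (convergenceIndicator_sub_le_optLift hα_nonneg)
  simp only [tsum_convergenceIndicator_mul fun a ↦ (μ a).toReal,
    tsum_convergenceIndicator_mul fun b ↦ (ν b).toReal] at hduality
  exact sub_le_iff_le_add'.1 hduality

/-- adequacy of the Wasserstein lifting of the subdistribution monad:
the difference of the probabilities of convergence is bounded by `W(α_⊥)(μ, ν)`. -/
theorem wasserstein_adequacy {X Y : Type*} [Countable X] [Countable Y]
    (α : X → Y → ℝ) (hα : ∀ x y, α x y ∈ Set.Icc (0 : ℝ) 1)
    (μ : PMF (Option X)) (ν : PMF (Option Y)) :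
    (∑' x : X, (μ (some x)).toReal) ≤
      (∑' y : Y, (ν (some y)).toReal) + Wass (optLift α) μ ν :=
  wasserstein_adequacy_general (fun x y ↦ (hα x y).1) (fun x y ↦ (hα x y).2) μ ν
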